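/- arXiv:2302.02672 — 5 statements merged into one kernel-verified Lean document; each statement's English description precedes it below -/
import Mathlib

section
/- Let n ≥ 1. For each i = 1,…,n let p_i : ℝ → ℝ be a strictly positive probability density on ℝ whose logarithm is twice continuously differentiable, such that the distribution with density p_i has mean zero and variance one, and such that at most one index i has (log p_i)'' constant (i.e., at most one component is Gaussian). Let A be an invertible n×n real matrix and let μ be the product measure on ℝⁿ whose i-th coordinate has density p_i (the law of the vector s of independent components). If the pushforward of μ under the linear map x ↦ A x is itself a product measure (i.e., the coordinates of x = A s are mutually independent), then A has exactly one nonzero entry in each row and each column. -/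
open MeasureTheory Matrix Real

lemma ica_sigmaFinite {n : ℕ} (ν : Fin n → Measure ℝ) (h0 : Measure.pi ν Set.univ ≠ 0)
    (hT : Measure.pi ν Set.univ ≠ ⊤) (i : Fin n) : SigmaFinite (ν i) := by
  have hdef : Measure.pi ν Set.univ
      = OuterMeasure.pi (fun i => (ν i).toOuterMeasure) Set.univ := by
    rw [Measure.pi, toMeasure_apply _ _ MeasurableSet.univ]
  rw [hdef] at h0 hT
  have hne : ∀ j, ν j Set.univ ≠ 0 := by
    intro j hj
    apply h0
    have := OuterMeasure.pi_pi_le (fun i => (ν i).toOuterMeasure) (fun _ => Set.univ)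
    rw [Set.pi_univ] at this
    refine le_antisymm (this.trans ?_) bot_le
    rw [Finset.prod_eq_zero (Finset.mem_univ j) (by simpa using hj)]
  rw [OuterMeasure.pi, OuterMeasure.boundedBy_apply] at hT
  have hT' := lt_top_iff_ne_top.2 hT
  rw [iInf_lt_iff] at hT'
  obtain ⟨t, ht⟩ := hT'
  rw [iInf_lt_iff] at ht
  obtain ⟨hcov, hsum⟩ := ht
  have hfin : ∀ m, (t m).Nonempty → ∏ j, ν j (Function.eval j '' t m) ≠ ⊤ := by
    intro m hm
    have := ENNReal.ne_top_of_tsum_ne_top hsum.ne m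
    simpa [hm, piPremeasure] using this
  classical
  have hz : ∀ j, ∃ z : ℝ, ∀ m, ν j (Function.eval j '' t m) = 0 → z ∉ Function.eval j '' t m := by
    intro j
    by_contra! hcon
    apply hne j
    have hsub : (Set.univ : Set ℝ) ⊆ ⋃ m : {m // ν j (Function.eval j '' t m) = 0},
        Function.eval j '' t m.1 := by
      intro z _
      obtain ⟨m, hm, hzm⟩ := hcon z
      exact Set.mem_iUnion.2 ⟨⟨m, hm⟩, hzm⟩
    exact measure_mono_null hsub (measure_iUnion_null fun m => m.2)
  choose z hz using hz
  refine (Measure.FiniteSpanningSetsIn.sigmaFinite (C := Set.univ) (μ := ν i)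
    ⟨fun m => if ν i (Function.eval i '' t m) < ⊤ then Function.eval i '' t m else ∅,
      fun _ => Set.mem_univ _, fun m => ?_, ?_⟩)
  · split_ifs with h
    · exact h
    · simp
  · refine Set.eq_univ_of_forall fun y => ?_
    obtain ⟨m, hm⟩ := Set.mem_iUnion.1 (hcov (Set.mem_univ (Function.update z i y)))
    refine Set.mem_iUnion.2 ⟨m, ?_⟩
    have hy : y ∈ Function.eval i '' t m := ⟨_, hm, by simp⟩
    by_cases h : ν i (Function.eval i '' t m) < ⊤
    · simp only [h, if_true]; exact hy
    · exfalso
      have htop : ν i (Function.eval i '' t m) = ⊤ := by simpa using h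
      have hprod := hfin m ⟨_, hm⟩
      rw [← Finset.mul_prod_erase _ _ (Finset.mem_univ i), htop] at hprod
      have h00 : ∏ j ∈ Finset.univ.erase i, ν j (Function.eval j '' t m) = 0 := by
        by_contra hcon
        exact hprod (ENNReal.top_mul hcon)
      obtain ⟨j, hj, hj0⟩ := Finset.prod_eq_zero_iff.1 h00
      refine hz j m hj0 ⟨_, hm, ?_⟩
      simp [Function.update_of_ne (Finset.ne_of_mem_erase hj)]

lemma ica_pi_density {n : ℕ} (p : Fin n → ℝ → ℝ) (hpos : ∀ i t, 0 < p i t)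
    (hint : ∀ i, Integrable (p i)) :
    Measure.pi (fun i => volume.withDensity (fun t => ENNReal.ofReal (p i t)))
      = (volume : Measure (Fin n → ℝ)).withDensity
          (fun x => ENNReal.ofReal (∏ i, p i (x i))) := by
  have : ∀ i, IsFiniteMeasure (volume.withDensity (fun t => ENNReal.ofReal (p i t))) :=
    fun i => isFiniteMeasure_withDensity_ofReal (hint i).2
  refine Measure.pi_eq fun s hs => ?_
  rw [withDensity_apply _ (MeasurableSet.univ_pi hs), volume_pi, Measure.restrict_pi_pi,
    ← ofReal_integral_eq_lintegral_ofReal]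
  · rw [integral_fintype_prod_eq_prod, ENNReal.ofReal_prod_of_nonneg]
    · refine Finset.prod_congr rfl fun i _ => ?_
      rw [withDensity_apply _ (hs i), ← ofReal_integral_eq_lintegral_ofReal]
      · exact (hint i).restrict
      · exact Filter.Eventually.of_forall fun t => (hpos i t).le
    · exact fun i _ => integral_nonneg fun t => (hpos i t).le
  · exact Integrable.fintype_prod fun i => (hint i).restrict
  · exact Filter.Eventually.of_forall fun x => Finset.prod_nonneg fun i _ => (hpos i _).le

lemma ica_tendsto {n : ℕ} (f : (Fin n → ℝ) → ℝ) (hf : Continuous f) (x : Fin n → ℝ) :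
    Filter.Tendsto (fun ε : ℝ => (∫ y in Metric.closedBall x ε, f y) / (2 * ε) ^ n)
      (nhdsWithin 0 (Set.Ioi 0)) (nhds (f x)) := by
  have hv : ∀ ε : ℝ, 0 < ε → volume.real (Metric.closedBall x ε) = (2 * ε) ^ n := by
    intro ε hε
    rw [Measure.real, Real.volume_pi_closedBall _ hε.le, ENNReal.toReal_ofReal (by positivity)]
    simp
  have hs : Filter.Tendsto (fun ε : ℝ => Metric.closedBall x ε) (nhdsWithin 0 (Set.Ioi 0))
      (nhds x).smallSets := by
    rw [Filter.tendsto_smallSets_iff]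
    intro t ht
    obtain ⟨δ, hδ, hsub⟩ := Metric.nhds_basis_closedBall.mem_iff.1 ht
    filter_upwards [Ioo_mem_nhdsGT hδ] with ε hε
    exact (Metric.closedBall_subset_closedBall hε.2.le).trans hsub
  have h := hf.continuousAt.integral_sub_linear_isLittleO_ae (μ := volume) (x := x)
    (hf.stronglyMeasurable.stronglyMeasurableAtFilter) hs (fun ε => (2 * ε) ^ n) (by
      filter_upwards [self_mem_nhdsWithin] with ε hε
      exact hv ε hε)
  have h2 := h.tendsto_div_nhds_zero.add_const (f x)
  rw [zero_add] at h2
  refine h2.congr' ?_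
  filter_upwards [self_mem_nhdsWithin] with ε hε
  have : (2 * ε) ^ n ≠ 0 := by have : 0 < ε := hε; positivity
  simp only [smul_eq_mul]
  field_simp
  ring

/-- swap identity -/
lemma ica_swap {n : ℕ} (f : (Fin n → ℝ) → ℝ) (hf : Continuous f) (hpos : ∀ x, 0 ≤ f x)
    (ν : Fin n → Measure ℝ) [∀ i, SigmaFinite (ν i)] (c : ENNReal) (hc0 : c ≠ 0) (hcT : c ≠ ⊤)
    (h : Measure.pi ν = c • (volume.withDensity fun x => ENNReal.ofReal (f x)))
    (x y : Fin n → ℝ) (k : Fin n) :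
    f x * f y = f (Function.update x k (y k)) * f (Function.update y k (x k)) := by
  have hI : ∀ z : Fin n → ℝ, ∀ ε : ℝ, 0 < ε → ENNReal.ofReal (∫ y in Metric.closedBall z ε, f y)
      = c⁻¹ * ∏ i, ν i (Metric.closedBall (z i) ε) := by
    intro z ε hε
    rw [← Measure.pi_pi, ← closedBall_pi _ hε.le, h, Measure.smul_apply, smul_eq_mul, ← mul_assoc,
      ENNReal.inv_mul_cancel hc0 hcT, one_mul,
      withDensity_apply _ Metric.isClosed_closedBall.measurableSet,
      ofReal_integral_eq_lintegral_ofReal]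
    · exact hf.continuousOn.integrableOn_compact (isCompact_closedBall _ _)
    · exact Filter.Eventually.of_forall hpos
  have hint0 : ∀ (z : Fin n → ℝ) (ε : ℝ), 0 ≤ ∫ y in Metric.closedBall z ε, f y :=
    fun z ε => integral_nonneg hpos
  have key : ∀ ε : ℝ, 0 < ε →
      (∫ z in Metric.closedBall x ε, f z) * (∫ z in Metric.closedBall y ε, f z)
      = (∫ z in Metric.closedBall (Function.update x k (y k)) ε, f z)
        * (∫ z in Metric.closedBall (Function.update y k (x k)) ε, f z) := by
    intro ε hε
    rw [← ENNReal.ofReal_eq_ofReal_iff (mul_nonneg (hint0 _ _) (hint0 _ _))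
      (mul_nonneg (hint0 _ _) (hint0 _ _)), ENNReal.ofReal_mul (hint0 _ _),
      ENNReal.ofReal_mul (hint0 _ _), hI _ _ hε, hI _ _ hε, hI _ _ hε, hI _ _ hε,
      mul_mul_mul_comm, mul_mul_mul_comm c⁻¹ (∏ i, ν i (Metric.closedBall (Function.update x k (y k) i) ε)), ← Finset.prod_mul_distrib, ← Finset.prod_mul_distrib]
    congr 1
    refine Finset.prod_congr rfl fun i _ => ?_
    by_cases hik : i = k
    · subst hik; simp [mul_comm]
    · simp [hik]
  refine tendsto_nhds_unique ((ica_tendsto f hf x).mul (ica_tendsto f hf y)) ?_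
  refine ((ica_tendsto f hf (Function.update x k (y k))).mul
    (ica_tendsto f hf (Function.update y k (x k)))).congr' ?_
  filter_upwards [self_mem_nhdsWithin] with ε hε
  rw [div_mul_div_comm, div_mul_div_comm, key ε hε]

lemma ica_map {n : ℕ} (h : (Fin n → ℝ) → ℝ) (hc : Continuous h)
    (A B : Matrix (Fin n) (Fin n) ℝ) (hBA : B * A = 1) (hdet : A.det ≠ 0) :
    Measure.map (fun x => A.mulVec x) (volume.withDensity fun x => ENNReal.ofReal (h x))
      = ENNReal.ofReal |A.det⁻¹| •
        (volume.withDensity fun x => ENNReal.ofReal (h (B.mulVec x))) := by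
  have hm : Measurable (fun x : Fin n → ℝ => A.mulVec x) := by fun_prop
  have hmB : Measurable (fun x : Fin n → ℝ => ENNReal.ofReal (h (B.mulVec x))) := by fun_prop
  ext s hs
  have hvol := Real.map_matrix_volume_pi_eq_smul_volume_pi hdet
  have hA : (⇑(toLin' A) : (Fin n → ℝ) → (Fin n → ℝ)) = fun x => A.mulVec x := by
    ext1 x; simp
  rw [hA] at hvol
  rw [Measure.map_apply hm hs, withDensity_apply _ (hm hs), Measure.smul_apply,
    withDensity_apply _ hs, smul_eq_mul, ← smul_eq_mul, ← lintegral_smul_measure,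
    ← Measure.restrict_smul, ← hvol, setLIntegral_map hs hmB hm]
  simp [Matrix.mulVec_mulVec, hBA]

lemma ica_affine (p : ℝ → ℝ) (hpos : ∀ t, 0 < p t) (hint : ∫ t, p t = 1)
    (hs : ContDiff ℝ 2 (fun t => Real.log (p t)))
    (h0 : ∀ t, deriv (deriv (fun s => Real.log (p s))) t = 0) : False := by
  have hd : Differentiable ℝ (deriv (fun s => Real.log (p s))) :=
    (hs.iterate_deriv' 1 1).differentiable (by norm_num)
  have hc : ∀ t, deriv (fun s => Real.log (p s)) t = deriv (fun s => Real.log (p s)) 0 :=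
    fun t => is_const_of_deriv_eq_zero hd h0 t 0
  set a := deriv (fun s => Real.log (p s)) 0 with ha
  have hd1 : Differentiable ℝ (fun s => Real.log (p s)) := hs.differentiable (by norm_num)
  have hlin : ∀ t, Real.log (p t) = Real.log (p 0) + a * t := by
    intro t
    have := is_const_of_deriv_eq_zero (f := fun s => Real.log (p s) - a * s) (𝕜 := ℝ)
      (by fun_prop) (fun s => by
        have h1 : HasDerivAt (fun s => Real.log (p s)) a s := by
          rw [← hc s]; exact (hd1 s).hasDerivAt
        have h2 := h1.fun_sub ((hasDerivAt_id s).const_mul a)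
        simpa using h2.deriv) t 0
    simp at this
    linarith
  have hi : Integrable p := by
    by_contra hcon
    rw [integral_undef hcon] at hint
    norm_num at hint
  have hi2 : Integrable (fun t => p t + p (-t)) := hi.add hi.comp_neg
  have hconst : Integrable (fun _ : ℝ => p 0) := by
    refine hi2.mono' aestronglyMeasurable_const (Filter.Eventually.of_forall fun t => ?_)
    rw [Real.norm_eq_abs, abs_of_pos (hpos 0)]
    rcases le_total 0 (a * t) with h | h
    · have : p 0 ≤ p t := by
        rw [← Real.log_le_log_iff (hpos _) (hpos _), hlin t]; linarith
      linarith [hpos (-t)]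
    · have : p 0 ≤ p (-t) := by
        rw [← Real.log_le_log_iff (hpos _) (hpos _), hlin (-t)]; linarith
      linarith [hpos t]
  rw [integrable_const_iff] at hconst
  rcases hconst with h | h
  · exact (hpos 0).ne' h
  · have := h.measure_univ_lt_top
    simp at this

lemma ica_deriv {n : ℕ} (l : Fin n → ℝ → ℝ) (hl : ∀ i, ContDiff ℝ 2 (l i)) (u v s : Fin n → ℝ)
    (h : ∀ a b : ℝ, ∑ i, l i (s i) + ∑ i, l i (s i + a * u i + b * v i)
      = ∑ i, l i (s i + a * u i) + ∑ i, l i (s i + b * v i)) :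
    ∑ i, u i * v i * deriv (deriv (l i)) (s i) = 0 := by
  have hd1 : ∀ i, Differentiable ℝ (l i) := fun i => (hl i).differentiable (by norm_num)
  have hd2 : ∀ i, Differentiable ℝ (deriv (l i)) :=
    fun i => ((hl i).iterate_deriv' 1 1).differentiable (by norm_num)
  have h1 : ∀ b : ℝ, ∑ i, u i * deriv (l i) (s i + b * v i) = ∑ i, u i * deriv (l i) (s i) := by
    intro b
    have hL : HasDerivAt (fun a : ℝ => ∑ i, l i (s i) + ∑ i, l i (s i + a * u i + b * v i))
        (∑ i, u i * deriv (l i) (s i + b * v i)) 0 := by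
      refine (HasDerivAt.fun_sum fun i _ => ?_).const_add _
      have e : HasDerivAt (fun a : ℝ => s i + a * u i + b * v i) (u i) 0 := by
        simpa using (((hasDerivAt_id (0:ℝ)).mul_const (u i)).const_add (s i)).add_const (b * v i)
      have g : HasDerivAt (l i) (deriv (l i) (s i + b * v i)) (s i + 0 * u i + b * v i) := by
        simpa using (hd1 i (s i + b * v i)).hasDerivAt
      rw [mul_comm (u i)]
      exact g.comp (0:ℝ) e
    have hR : HasDerivAt (fun a : ℝ => ∑ i, l i (s i + a * u i) + ∑ i, l i (s i + b * v i))
        (∑ i, u i * deriv (l i) (s i)) 0 := by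
      refine (HasDerivAt.fun_sum fun i _ => ?_).add_const _
      have e : HasDerivAt (fun a : ℝ => s i + a * u i) (u i) 0 := by
        simpa using (((hasDerivAt_id (0:ℝ)).mul_const (u i)).const_add (s i))
      have g : HasDerivAt (l i) (deriv (l i) (s i)) (s i + 0 * u i) := by
        simpa using (hd1 i (s i)).hasDerivAt
      rw [mul_comm (u i)]
      exact g.comp (0:ℝ) e
    have he := funext fun a => h a b
    rw [he] at hL
    exact hL.unique hR
  have hL : HasDerivAt (fun b : ℝ => ∑ i, u i * deriv (l i) (s i + b * v i))
      (∑ i, u i * v i * deriv (deriv (l i)) (s i)) 0 := by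
    refine HasDerivAt.fun_sum fun i _ => ?_
    have e : HasDerivAt (fun b : ℝ => s i + b * v i) (v i) 0 := by
      simpa using (((hasDerivAt_id (0:ℝ)).mul_const (v i)).const_add (s i))
    have g : HasDerivAt (deriv (l i)) (deriv (deriv (l i)) (s i)) (s i + 0 * v i) := by
      simpa using (hd2 i (s i)).hasDerivAt
    have := (g.comp (0:ℝ) e).const_mul (u i)
    rw [mul_assoc, mul_comm (v i)]
    exact this
  have he := funext h1
  rw [he] at hL
  exact hL.unique (hasDerivAt_const _ _)

lemma ica_comb {n : ℕ} (A B : Matrix (Fin n) (Fin n) ℝ) (hBA : B * A = 1)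
    (hB : ∀ i k j, k ≠ j → B i k * B i j = 0) :
    (∀ k : Fin n, ∃! l : Fin n, A k l ≠ 0) ∧ (∀ l : Fin n, ∃! k : Fin n, A k l ≠ 0) := by
  have hex : ∀ i, ∃ k, B i k ≠ 0 := by
    intro i
    by_contra! hcon
    have := congrFun (congrFun hBA i) i
    simp [Matrix.mul_apply, hcon] at this
  choose σ hσ using hex
  have hz : ∀ i k, k ≠ σ i → B i k = 0 := fun i k hk =>
    (mul_eq_zero.1 (hB i k (σ i) hk)).resolve_right (hσ i)
  have hA : ∀ i j, B i (σ i) * A (σ i) j = if i = j then 1 else 0 := by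
    intro i j
    have := congrFun (congrFun hBA i) j
    rw [Matrix.mul_apply, Matrix.one_apply, Finset.sum_eq_single (σ i)] at this
    · exact this
    · intro k _ hk; rw [hz i k hk, zero_mul]
    · simp
  have hiff : ∀ i j, A (σ i) j ≠ 0 ↔ i = j := by
    intro i j
    have := hA i j
    constructor
    · intro h
      by_contra hij
      rw [if_neg hij] at this
      exact (mul_ne_zero (hσ i) h) this
    · intro hij h
      rw [if_pos hij, h, mul_zero] at this
      exact zero_ne_one this
  have hinj : Function.Injective σ := by
    intro i j hij
    rw [← hiff, hij, hiff]
  have hsurj := Finite.surjective_of_injective hinj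
  constructor
  · intro k
    obtain ⟨i, rfl⟩ := hsurj k
    exact ⟨i, (hiff i i).2 rfl, fun j hj => ((hiff i j).1 hj).symm⟩
  · intro l
    refine ⟨σ l, (hiff l l).2 rfl, fun k hk => ?_⟩
    obtain ⟨i, rfl⟩ := hsurj k
    rw [(hiff i l).1 hk]

/-- Identifiability of linear ICA: if the independent components have smooth
strictly positive densities with mean zero and unit variance, at most one of them
is "Gaussian" in the sense of having constant second log-derivative, and a linear
invertible mixing of them again has independent coordinates (i.e. the pushforward
is a product measure), then the mixing matrix has exactly one nonzero entry
in each row and each column. -/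
theorem linear_ICA_identifiability
    (n : ℕ) (hn : 1 ≤ n)
    (p : Fin n → ℝ → ℝ)
    (hpos : ∀ i, ∀ t : ℝ, 0 < p i t)
    (hdens : ∀ i, ∫ t : ℝ, p i t = 1)
    (hsmooth : ∀ i, ContDiff ℝ 2 (fun t => Real.log (p i t)))
    (hmean : ∀ i, ∫ t : ℝ, t * p i t = 0)
    (hvar : ∀ i, ∫ t : ℝ, t ^ 2 * p i t = 1)
    (hgauss : ∀ i j : Fin n,
      (∃ c : ℝ, ∀ t : ℝ, deriv (deriv (fun s => Real.log (p i s))) t = c) →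
      (∃ c : ℝ, ∀ t : ℝ, deriv (deriv (fun s => Real.log (p j s))) t = c) →
      i = j)
    (A : Matrix (Fin n) (Fin n) ℝ) (hA : IsUnit A)
    (μ : Measure (Fin n → ℝ))
    (hμ : μ = Measure.pi (fun i => volume.withDensity (fun t => ENNReal.ofReal (p i t))))
    (hprod : ∃ ν : Fin n → Measure ℝ,
      Measure.map (fun x => A.mulVec x) μ = Measure.pi ν) :
    (∀ k : Fin n, ∃! l : Fin n, A k l ≠ 0) ∧
    (∀ l : Fin n, ∃! k : Fin n, A k l ≠ 0) := by
  obtain ⟨ν, hν⟩ := hprod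
  have hint : ∀ i, Integrable (p i) := by
    intro i
    by_contra hcon
    have := hdens i
    rw [integral_undef hcon] at this
    norm_num at this
  have hcont : ∀ i, Continuous (p i) := by
    intro i
    have : p i = fun t => Real.exp (Real.log (p i t)) := by
      ext t; rw [Real.exp_log (hpos i t)]
    rw [this]
    exact Real.continuous_exp.comp (hsmooth i).continuous
  have hdetU : IsUnit A.det := (Matrix.isUnit_iff_isUnit_det A).1 hA
  have hdet : A.det ≠ 0 := hdetU.ne_zero
  set B := A⁻¹ with hBdef
  have hBA : B * A = 1 := Matrix.nonsing_inv_mul A hdetU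
  -- total mass
  have hprob : ∀ i, IsProbabilityMeasure
      (volume.withDensity (fun t => ENNReal.ofReal (p i t))) := by
    intro i
    refine ⟨?_⟩
    rw [withDensity_apply _ MeasurableSet.univ, Measure.restrict_univ,
      ← ofReal_integral_eq_lintegral_ofReal (hint i)
        (Filter.Eventually.of_forall fun t => (hpos i t).le), hdens i, ENNReal.ofReal_one]
  have hmass : Measure.pi ν Set.univ = 1 := by
    rw [← hν, Measure.map_apply (by fun_prop) MeasurableSet.univ, Set.preimage_univ, hμ]
    exact measure_univ
  have : ∀ i, SigmaFinite (ν i) :=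
    fun i => ica_sigmaFinite ν (by simp [hmass]) (by simp [hmass]) i
  -- density of the pushforward
  have hpi : Measure.pi ν = ENNReal.ofReal |A.det⁻¹| •
      (volume.withDensity fun x => ENNReal.ofReal (∏ i, p i (B.mulVec x i))) := by
    rw [← hν, hμ, ica_pi_density p hpos hint]
    exact ica_map (fun x => ∏ i, p i (x i)) (by fun_prop) A B hBA hdet
  have hswap := ica_swap (fun x => ∏ i, p i (B.mulVec x i))
    (continuous_finsetProd _ fun i _ => (hcont i).comp (by fun_prop))
    (fun x => Finset.prod_nonneg fun i _ => (hpos i _).le) ν _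
    (by simpa using hdet) ENNReal.ofReal_ne_top hpi
  -- second-derivative identity
  have hder : ∀ k j, k ≠ j → ∀ s : Fin n → ℝ,
      ∑ i, B i k * B i j * deriv (deriv (fun t => Real.log (p i t))) (s i) = 0 := by
    intro k j hkj s
    refine ica_deriv (fun i t => Real.log (p i t)) hsmooth (fun i => B i k) (fun i => B i j) s ?_
    intro a b
    have hAB : A * B = 1 := Matrix.mul_nonsing_inv A hdetU
    set x := A.mulVec s with hx
    have hBx : B.mulVec x = s := by rw [hx, Matrix.mulVec_mulVec, hBA, Matrix.one_mulVec]
    have h := hswap x (x + Pi.single k a + Pi.single j b) k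
    have e1 : Function.update x k ((x + Pi.single k a + Pi.single j b : Fin n → ℝ) k)
        = x + Pi.single k a := by
      ext i
      by_cases hik : i = k
      · subst hik; simp [hkj]
      · simp [hik]
    have e2 : Function.update (x + Pi.single k a + Pi.single j b : Fin n → ℝ) k (x k)
        = x + Pi.single j b := by
      ext i
      by_cases hik : i = k
      · subst hik; simp [hkj]
      · simp [hik]
    rw [e1, e2] at h
    have hs : ∀ (c : ℝ) (m i : Fin n), B.mulVec (Pi.single m c) i = c * B i m := by
      intro c m i
      simp [Matrix.mulVec_single, mul_comm]
    simp only [Matrix.mulVec_add, Pi.add_apply, hBx, hs] at h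
    have hne : ∀ t : Fin n → ℝ, ∏ i, p i (t i) ≠ 0 :=
      fun t => Finset.prod_ne_zero_iff.2 fun i _ => (hpos i _).ne'
    have h' := congrArg Real.log h
    rw [Real.log_mul (hne _) (hne _), Real.log_mul (hne _) (hne _)] at h'
    simpa only [Real.log_prod (fun i _ => (hpos i _).ne')] using h'
  refine ica_comb A B hBA ?_
  intro i k j hkj
  by_contra hne
  have hconst : ∀ i, B i k * B i j ≠ 0 →
      ∀ t, deriv (deriv (fun s => Real.log (p i s))) t
        = deriv (deriv (fun s => Real.log (p i s))) 0 := by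
    intro i hne t
    have h1 := hder k j hkj (Function.update 0 i t)
    have h0 := hder k j hkj 0
    rw [← Finset.add_sum_erase _ _ (Finset.mem_univ i)] at h1 h0
    have he : ∑ m ∈ Finset.univ.erase i, B m k * B m j *
          deriv (deriv (fun t => Real.log (p m t))) (Function.update (0 : Fin n → ℝ) i t m)
        = ∑ m ∈ Finset.univ.erase i, B m k * B m j *
          deriv (deriv (fun t => Real.log (p m t))) ((0 : Fin n → ℝ) m) := by
      refine Finset.sum_congr rfl fun m hm => ?_
      rw [Function.update_of_ne (Finset.ne_of_mem_erase hm)]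
    rw [he, Function.update_self] at h1
    refine mul_left_cancel₀ hne ?_
    simp only [Pi.zero_apply] at h0 h1
    linarith
  have huniq : ∀ m, m ≠ i → B m k * B m j = 0 := by
    intro m hm
    by_contra hmne
    exact hm (hgauss m i ⟨_, hconst m hmne⟩ ⟨_, hconst i hne⟩)
  refine ica_affine (p i) (hpos i) (hdens i) (hsmooth i) fun t => ?_
  have h0 := hder k j hkj (fun _ => t)
  rw [Finset.sum_eq_single i (fun m _ hm => by rw [huniq m hm, zero_mul]) (by simp)] at h0
  exact (mul_eq_zero.1 h0).resolve_left hne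
end

section
/- Let A be a real orthogonal n×n matrix and let d : Fin n → ℝ have pairwise distinct values (d i ≠ d j for i ≠ j). If the matrix Aᵀ · diag(d) · A is diagonal, then A has exactly one nonzero entry in each row and each column. -/
open Matrix

/-- Uniqueness of the eigendecomposition step: if `A` is orthogonal, `d` has
pairwise distinct entries, and `Aᵀ * diagonal d * A` is diagonal, then `A` has
exactly one nonzero entry in each row and each column. -/
theorem orthogonal_diagonalization_monomial
    (n : ℕ) (A : Matrix (Fin n) (Fin n) ℝ) (hA : Aᵀ * A = 1)
    (d : Fin n → ℝ) (hd : ∀ i j : Fin n, i ≠ j → d i ≠ d j)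
    (hdiag : ∀ k l : Fin n, k ≠ l → (Aᵀ * Matrix.diagonal d * A) k l = 0) :
    (∀ k : Fin n, ∃! l : Fin n, A k l ≠ 0) ∧
    (∀ l : Fin n, ∃! k : Fin n, A k l ≠ 0) := by
  have hA' : A * Aᵀ = 1 := mul_eq_one_comm.mp hA
  have hE : ∃ e : Fin n → ℝ, Aᵀ * Matrix.diagonal d * A = Matrix.diagonal e := by
    refine ⟨fun k => (Aᵀ * Matrix.diagonal d * A) k k, ?_⟩
    ext k l
    by_cases h : k = l
    · subst h; simp only [Matrix.diagonal_apply_eq]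
    · rw [hdiag k l h, Matrix.diagonal_apply_ne _ h]
  obtain ⟨e, he⟩ := hE
  have hDA : Matrix.diagonal d * A = A * Matrix.diagonal e := by
    rw [← he, ← Matrix.mul_assoc, ← Matrix.mul_assoc, hA', Matrix.one_mul]
  have hde : ∀ k l, A k l ≠ 0 → d k = e l := by
    intro k l h
    have h1 := congrFun (congrFun hDA k) l
    rw [Matrix.diagonal_mul, Matrix.mul_diagonal, mul_comm] at h1
    exact mul_left_cancel₀ h h1
  have hcol : ∀ l i j, A i l ≠ 0 → A j l ≠ 0 → i = j := by
    intro l i j hi hj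
    by_contra hij
    exact hd i j hij ((hde i l hi).trans (hde j l hj).symm)
  refine ⟨fun k => ?_, fun l => ?_⟩
  · have hex : ∃ l, A k l ≠ 0 := by
      by_contra! h
      have h1 := congrFun (congrFun hA' k) k
      simp [Matrix.mul_apply, h] at h1
    obtain ⟨l, hl⟩ := hex
    refine ⟨l, hl, fun m hm => ?_⟩
    by_contra hml
    have h1 := congrFun (congrFun hA m) l
    rw [Matrix.one_apply_ne hml, Matrix.mul_apply, Finset.sum_eq_single k] at h1
    · exact mul_ne_zero hm hl h1
    · intro b _ hb
      have : A b l = 0 := by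
        by_contra h
        exact hb (hcol l b k h hl)
      rw [this, mul_zero]
    · simp
  · have hex : ∃ k, A k l ≠ 0 := by
      by_contra! h
      have h1 := congrFun (congrFun hA l) l
      simp [Matrix.mul_apply, h] at h1
    obtain ⟨k, hk⟩ := hex
    exact ⟨k, hk, fun m hm => hcol l m k hm hk⟩
end

section
/- Darmois construction / conditional probability integral transform: let ρ be a probability measure on α × ℝ (α a measurable space with suitable regularity) such that for ρ.fst-almost every a ∈ α the conditional cumulative distribution function x ↦ condCDF ρ a x is continuous. Then the pushforward of ρ under the map (a, x) ↦ (a, condCDF ρ a x) equals the product of ρ.fst with the uniform probability measure on [0,1] (Lebesgue measure restricted to the interval [0,1]). In particular, the random variable z = g(x₁, x₂) with g(ξ₁, ξ₂) = P(x₂ < ξ₂ | x₁ = ξ₁) is uniformly distributed and statistically independent of the first coordinate x₁. -/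
open MeasureTheory ProbabilityTheory

/-- One-dimensional probability integral transform. -/
lemma map_stieltjes_uniform (F : StieltjesFunction ℝ)
    (h0 : Filter.Tendsto F Filter.atBot (nhds 0)) (h1 : Filter.Tendsto F Filter.atTop (nhds 1))
    (hF : Continuous F) (hn : ∀ x, 0 ≤ F x) (hl : ∀ x, F x ≤ 1) :
    Measure.map F F.measure = volume.restrict (Set.Icc (0 : ℝ) 1) := by
  have hp : IsProbabilityMeasure F.measure := F.isProbabilityMeasure h0 h1
  have hp2 : IsProbabilityMeasure (Measure.map F F.measure) :=
    Measure.isProbabilityMeasure_map hF.measurable.aemeasurable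
  refine Measure.ext_of_Iic _ _ fun t => ?_
  rw [Measure.map_apply hF.measurable measurableSet_Iic, Measure.restrict_apply measurableSet_Iic]
  rcases lt_or_ge t 0 with ht | ht
  · have e1 : F ⁻¹' Set.Iic t = ∅ := by
      ext x; simpa using ht.trans_le (hn x)
    have e2 : Set.Iic t ∩ Set.Icc (0:ℝ) 1 = ∅ := by
      ext x; simp only [Set.mem_inter_iff, Set.mem_Iic, Set.mem_Icc, Set.mem_empty_iff_false,
        iff_false]
      rintro ⟨h, h', _⟩; linarith
    rw [e1, e2]; simp
  rcases le_or_gt 1 t with ht1 | ht1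
  · have e1 : F ⁻¹' Set.Iic t = Set.univ := by
      ext x; simpa using (hl x).trans ht1
    have e2 : Set.Iic t ∩ Set.Icc (0:ℝ) 1 = Set.Icc 0 1 := by
      ext x; simp only [Set.mem_inter_iff, Set.mem_Iic, Set.mem_Icc, and_iff_right_iff_imp]
      rintro ⟨h, h'⟩; linarith
    rw [e1, e2]; simp
  have e2 : Set.Iic t ∩ Set.Icc (0:ℝ) 1 = Set.Icc 0 t := by
    ext x; simp only [Set.mem_inter_iff, Set.mem_Iic, Set.mem_Icc]
    constructor
    · rintro ⟨h, h', _⟩; exact ⟨h', h⟩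
    · rintro ⟨h, h'⟩; exact ⟨h', h, by linarith⟩
  rw [e2, Real.volume_Icc, sub_zero]
  obtain ⟨b, hb⟩ : ∃ b, t < F b := (h1.eventually (lt_mem_nhds ht1)).exists
  rcases Set.eq_empty_or_nonempty (F ⁻¹' Set.Iic t) with he | hne
  · have : t ≤ 0 := by
      by_contra! h
      obtain ⟨c, hc⟩ := (h0.eventually (gt_mem_nhds h)).exists
      have : c ∈ F ⁻¹' Set.Iic t := hc.le
      rw [he] at this
      exact this
    rw [he, ENNReal.ofReal_of_nonpos this]; simp
  · have hbdd : BddAbove (F ⁻¹' Set.Iic t) := by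
      refine ⟨b, fun x hx => ?_⟩
      by_contra! h
      have h2 : F x ≤ t := hx
      linarith [F.mono h.le]
    have hmem := (isClosed_Iic.preimage hF).csSup_mem hne hbdd
    set x₀ := sSup (F ⁻¹' Set.Iic t) with hx₀
    have hle : F x₀ ≤ t := hmem
    have heq : F x₀ = t := by
      obtain ⟨y, hy⟩ := mem_range_of_exists_le_of_exists_ge hF ⟨x₀, hle⟩ ⟨b, hb.le⟩
      have hy' : y ≤ x₀ := le_csSup hbdd (show F y ≤ t from hy.le)
      exact le_antisymm hle (hy ▸ F.mono hy')
    have e1 : F ⁻¹' Set.Iic t = Set.Iic x₀ := by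
      ext x
      exact ⟨fun hx => le_csSup hbdd hx, fun hx => (F.mono hx).trans hle⟩
    rw [e1, F.measure_Iic h0, heq, sub_zero]

theorem darmois_construction_aux
    {α : Type*} [MeasurableSpace α]
    (ρ : Measure (α × ℝ)) [IsProbabilityMeasure ρ] :
    ∃ κ : Kernel α ℝ, IsMarkovKernel κ ∧ (∀ a, κ a = (condCDF ρ a).measure) ∧
      ρ = ρ.fst ⊗ₘ κ := by
  let κ : Kernel α ℝ := ⟨fun a => (condCDF ρ a).measure, measurable_measure_condCDF ρ⟩
  have hκ : IsMarkovKernel κ := ⟨fun a => instIsProbabilityMeasureCondCDF ρ a⟩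
  refine ⟨κ, hκ, fun a => rfl, ?_⟩
  have h := compProd_toKernel (isCondKernelCDF_condCDF ρ)
  have h2 := congrArg (fun k => k ()) h
  simp only [Kernel.const_apply] at h2
  ext s hs
  conv_lhs => rw [← h2]
  rw [Kernel.compProd_apply hs, Measure.compProd_apply hs]
  simp only [Kernel.const_apply]
  rfl

/-- Darmois construction / conditional probability integral transform: if for
`ρ.fst`-almost every `a` the conditional CDF `x ↦ condCDF ρ a x` is continuous,
then pushing `ρ` forward by `(a, x) ↦ (a, condCDF ρ a x)` yields the product of
the first marginal `ρ.fst` with the uniform measure on `[0,1]`.  In particular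
`condCDF ρ x₁ x₂` is uniform on `[0,1]` and independent of `x₁`. -/
theorem darmois_construction
    {α : Type*} [MeasurableSpace α]
    (ρ : Measure (α × ℝ)) [IsProbabilityMeasure ρ]
    (hcont : ∀ᵐ a ∂ρ.fst, Continuous (fun x : ℝ => condCDF ρ a x)) :
    Measure.map (fun p : α × ℝ => (p.1, condCDF ρ p.1 p.2)) ρ =
      ρ.fst.prod (volume.restrict (Set.Icc (0 : ℝ) 1)) := by
  obtain ⟨κ, hκ, hκa, hρ⟩ := darmois_construction_aux ρ
  have hm : Measurable (fun p : α × ℝ => condCDF ρ p.1 p.2) := by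
    have h1 : Measurable fun p : α × ℝ =>
        (κ.comap Prod.fst measurable_fst) p (Prod.mk p ⁻¹' {q : (α × ℝ) × ℝ | q.2 ≤ q.1.2}) :=
      Kernel.measurable_kernel_prodMk_left
        (measurableSet_le measurable_snd (measurable_snd.comp measurable_fst))
    convert h1.ennreal_toReal using 2 with p
    have : (Prod.mk p ⁻¹' {q : (α × ℝ) × ℝ | q.2 ≤ q.1.2}) = Set.Iic p.2 := rfl
    rw [this, Kernel.comap_apply, hκa, measure_condCDF_Iic,
      ENNReal.toReal_ofReal (condCDF_nonneg _ _ _)]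
  have hm2 : Measurable (fun p : α × ℝ => (p.1, condCDF ρ p.1 p.2)) := measurable_fst.prodMk hm
  ext s hs
  rw [Measure.map_apply hm2 hs, Measure.prod_apply hs]
  have e : ρ ((fun p : α × ℝ => (p.1, condCDF ρ p.1 p.2)) ⁻¹' s) =
      (ρ.fst ⊗ₘ κ) ((fun p : α × ℝ => (p.1, condCDF ρ p.1 p.2)) ⁻¹' s) :=
    congrArg (fun m : Measure (α × ℝ) =>
      m ((fun p : α × ℝ => (p.1, condCDF ρ p.1 p.2)) ⁻¹' s)) hρ
  rw [e, Measure.compProd_apply (hm2 hs)]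
  refine lintegral_congr_ae ?_
  filter_upwards [hcont] with a ha
  rw [← map_stieltjes_uniform (condCDF ρ a) (tendsto_condCDF_atBot ρ a)
    (tendsto_condCDF_atTop ρ a) ha (condCDF_nonneg ρ a) (condCDF_le_one ρ a),
    Measure.map_apply ha.measurable (measurable_prodMk_left hs), hκa]
  rfl
end

section
/- Liouville-type theorem (locally isometric maps are orthogonally affine): let n ≥ 2 and let f : EuclideanSpace ℝ (Fin n) → EuclideanSpace ℝ (Fin n) be twice continuously differentiable (C²) such that for every x the Fréchet derivative Df(x) is a linear isometry, i.e., ‖Df(x) v‖ = ‖v‖ for all v. Then f is orthogonally affine: there exist a linear isometry equivalence U : EuclideanSpace ℝ (Fin n) ≃ₗᵢ[ℝ] EuclideanSpace ℝ (Fin n) and a vector b such that f(x) = U x + b for all x. -/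
/-- Liouville-type theorem: a C² map of `n`-dimensional Euclidean space
(`n ≥ 2`) whose Fréchet derivative is a linear isometry at every point is
orthogonally affine, i.e. of the form `x ↦ U x + b` with `U` an orthogonal
transformation. -/
theorem locally_isometric_is_orthogonally_affine
    (n : ℕ) (hn : 2 ≤ n)
    (f : EuclideanSpace ℝ (Fin n) → EuclideanSpace ℝ (Fin n))
    (hf : ContDiff ℝ 2 f)
    (hiso : ∀ x v : EuclideanSpace ℝ (Fin n), ‖fderiv ℝ f x v‖ = ‖v‖) :
    ∃ (U : EuclideanSpace ℝ (Fin n) ≃ₗᵢ[ℝ] EuclideanSpace ℝ (Fin n))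
      (b : EuclideanSpace ℝ (Fin n)), ∀ x, f x = U x + b := by
  have hinner : ∀ x u v, inner ℝ (fderiv ℝ f x u) (fderiv ℝ f x v) = inner ℝ u v := by
    intro x u v
    exact (LinearIsometry.mk (fderiv ℝ f x).toLinearMap (hiso x)).inner_map_map u v
  have hsurj : ∀ x, Function.Surjective (fderiv ℝ f x) := by
    intro x
    have hinj : Function.Injective (fderiv ℝ f x).toLinearMap :=
      (LinearIsometry.mk (fderiv ℝ f x).toLinearMap (hiso x)).injective
    exact LinearMap.injective_iff_surjective.1 hinj
  have hdf : Differentiable ℝ f := hf.differentiable (by norm_num)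
  have hddf : Differentiable ℝ (fderiv ℝ f) :=
    (hf.fderiv_right (m := 1) (by norm_num)).differentiable (by norm_num)
  have hsymm : ∀ x u v, fderiv ℝ (fderiv ℝ f) x u v = fderiv ℝ (fderiv ℝ f) x v u := by
    intro x u v
    exact (hf.contDiffAt.isSymmSndFDerivAt (x := x) (by simp)) u v
  have hanti : ∀ x w u v, inner ℝ (fderiv ℝ (fderiv ℝ f) x w u) (fderiv ℝ f x v)
      = - inner ℝ (fderiv ℝ (fderiv ℝ f) x w v) (fderiv ℝ f x u) := by
    intro x w u v
    have hd : ∀ a, HasFDerivAt (fun y => fderiv ℝ f y a)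
        ((fderiv ℝ (fderiv ℝ f) x).flip a) x := by
      intro a
      have h := (hddf x).hasFDerivAt.clm_apply (hasFDerivAt_const a x)
      rw [ContinuousLinearMap.comp_zero, zero_add] at h
      exact h
    have h1 := ((hd u).inner ℝ (hd v)).unique (by
      simp only [hinner]
      exact hasFDerivAt_const _ x)
    have h2 := congrArg (fun L => L w) h1
    simp [fderivInnerCLM_apply] at h2
    rw [real_inner_comm] at h2
    have h3 := real_inner_comm (fderiv ℝ f x u) (fderiv ℝ (fderiv ℝ f) x w v)
    have h4 := real_inner_comm (fderiv ℝ f x v) (fderiv ℝ (fderiv ℝ f) x w u)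
    linarith
  have hzero : ∀ x, fderiv ℝ (fderiv ℝ f) x = 0 := by
    intro x
    ext1 w
    ext1 u
    obtain ⟨v, hv⟩ := hsurj x (fderiv ℝ (fderiv ℝ f) x w u)
    have h1 := hanti x w u v
    have h2 := hanti x v w u
    have h3 := hanti x u v w
    rw [hsymm x w v] at h1
    rw [hsymm x v u] at h2
    rw [hsymm x u w] at h3
    have h4 : inner ℝ (fderiv ℝ (fderiv ℝ f) x w u) (fderiv ℝ f x v) = 0 := by linarith
    rw [hv] at h4
    simpa using inner_self_eq_zero.1 h4
  have hconst : ∀ x, fderiv ℝ f x = fderiv ℝ f 0 := fun x =>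
    is_const_of_fderiv_eq_zero hddf hzero x 0
  let U := LinearIsometryEquiv.ofSurjective
    (LinearIsometry.mk (fderiv ℝ f 0).toLinearMap (hiso 0)) (hsurj 0)
  refine ⟨U, f 0, fun x => ?_⟩
  have hU : U x = fderiv ℝ f 0 x := rfl
  have hg : Differentiable ℝ (fun y => f y - fderiv ℝ f 0 y) :=
    hdf.sub (fderiv ℝ f 0).differentiable
  have h := is_const_of_fderiv_eq_zero hg (fun y => by
    have := ((hdf y).hasFDerivAt.sub (fderiv ℝ f 0).hasFDerivAt).fderiv
    rw [hconst y, sub_self] at this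
    exact this) x 0
  simp only [map_zero, sub_zero] at h
  rw [hU, ← h]
  abel
end

section
/- Let n ≥ 1 and let f : EuclideanSpace ℝ (Fin n) → EuclideanSpace ℝ (Fin n) be twice continuously differentiable (C²) such that for every x the Fréchet derivative Df(x) is a linear isometry, i.e., ‖Df(x) v‖ = ‖v‖ for all v. Then the second derivative of f vanishes identically: the derivative of x ↦ Df(x) is zero at every point (equivalently, iteratedFDeriv ℝ 2 f x = 0 for all x). -/
/-- Key step of the Liouville-type theorem: a C² map of `n`-dimensional
Euclidean space (`n ≥ 1`) whose Fréchet derivative is a linear isometry at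
every point has identically vanishing second derivative. -/
theorem locally_isometric_second_derivative_zero
    (n : ℕ) (hn : 1 ≤ n)
    (f : EuclideanSpace ℝ (Fin n) → EuclideanSpace ℝ (Fin n))
    (hf : ContDiff ℝ 2 f)
    (hiso : ∀ x v : EuclideanSpace ℝ (Fin n), ‖fderiv ℝ f x v‖ = ‖v‖) :
    ∀ x, fderiv ℝ (fun y => fderiv ℝ f y) x = 0 := by
  intro x
  have hdiff : Differentiable ℝ (fderiv ℝ f) :=
    (hf.fderiv_right (m := 1) (by norm_num)).differentiable (by norm_num)
  have hin : ∀ y v w, inner ℝ (fderiv ℝ f y v) (fderiv ℝ f y w) = inner ℝ v w := by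
    intro y v w
    have h1 := hiso y (v + w)
    rw [map_add] at h1
    have h2 := norm_add_sq_real (fderiv ℝ f y v) (fderiv ℝ f y w)
    have h3 := norm_add_sq_real v w
    rw [h1, hiso, hiso] at h2
    linarith
  have hsymm : ∀ u v, fderiv ℝ (fderiv ℝ f) x u v = fderiv ℝ (fderiv ℝ f) x v u := by
    intro u v
    exact second_derivative_symmetric (f := f) (f' := fderiv ℝ f)
      (fun y => ((hf.differentiable (by norm_num)) y).hasFDerivAt) (hdiff x).hasFDerivAt u v
  have hanti : ∀ u v w, inner ℝ (fderiv ℝ (fderiv ℝ f) x u v) (fderiv ℝ f x w)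
      + inner ℝ (fderiv ℝ (fderiv ℝ f) x u w) (fderiv ℝ f x v) = 0 := by
    intro u v w
    have hv : ∀ v, HasFDerivAt (fun y => fderiv ℝ f y v)
        ((fderiv ℝ (fderiv ℝ f) x).flip v) x := fun v => by
      simpa using (hdiff x).hasFDerivAt.clm_apply (hasFDerivAt_const v x)
    have h := (hv v).inner ℝ (hv w)
    have hc : (fun y => inner ℝ (fderiv ℝ f y v) (fderiv ℝ f y w)) = fun _ => inner ℝ v w := by
      funext y
      exact hin y v w
    rw [hc] at h
    have h0 := congrArg (fun L => L u) (h.unique (hasFDerivAt_const _ x))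
    simp [fderivInnerCLM_apply] at h0
    rw [real_inner_comm] at h0
    linarith
  have hinj : Function.Injective (fderiv ℝ f x).toLinearMap := by
    rw [injective_iff_map_eq_zero]
    intro v h
    have h2 := hiso x v
    have h3 : fderiv ℝ f x v = 0 := h
    rw [h3, norm_zero] at h2
    exact norm_eq_zero.1 h2.symm
  have hsurj := LinearMap.injective_iff_surjective.1 hinj
  ext1 u
  ext1 v
  obtain ⟨w, hw⟩ := hsurj (fderiv ℝ (fderiv ℝ f) x u v)
  have hw' : fderiv ℝ f x w = fderiv ℝ (fderiv ℝ f) x u v := hw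
  have a1 := hanti u v w
  have a2 := hanti w u v
  have a3 := hanti v w u
  rw [hsymm w u, hsymm w v] at a2
  rw [hsymm v u] at a3
  have : inner ℝ (fderiv ℝ (fderiv ℝ f) x u v) (fderiv ℝ f x w) = 0 := by linarith
  rw [hw'] at this
  exact inner_self_eq_zero.1 this
end
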